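/- Let g ≥ 1 and d ≤ 2g be integers with d ≥ 0, and let R_g be the connected graph of genus g having exactly one vertex (hence g loop-edges). Then the unique effective divisor D of degree d on R_g (namely d times the vertex) satisfies r#_{R_g}(D) = ⌊d/2⌋. -/

import Mathlib

/-- A finite multigraph: vertices `V`, edges `E`, each edge has an (arbitrarily
ordered) pair of endpoints.  Loops are edges whose two endpoints coincide. -/
structure Multigraph where
  V : Type
  E : Type
  [decV : DecidableEq V]
  [fintV : Fintype V]
  [decE : DecidableEq E]
  [fintE : Fintype E]
  ends : E → V × V

attribute [instance] Multigraph.decV Multigraph.fintV Multigraph.decE Multigraph.fintE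

namespace Multigraph

variable (G : Multigraph)

/-- Two vertices are adjacent if some edge joins them. -/
def Adj (v w : G.V) : Prop := ∃ e : G.E, G.ends e = (v, w) ∨ G.ends e = (w, v)

/-- A multigraph is connected if it is nonempty and any two vertices are joined by a walk. -/
def Connected : Prop := Nonempty G.V ∧ ∀ v w : G.V, Relation.ReflTransGen G.Adj v w

/-- The number of edges joining `v` and `w`. -/
def numEdges (v w : G.V) : ℕ :=
  (Finset.univ.filter fun e : G.E => G.ends e = (v, w) ∨ G.ends e = (w, v)).card

/-- The number of loops based at `v`. -/
def numLoops (v : G.V) : ℕ :=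
  (Finset.univ.filter fun e : G.E => G.ends e = (v, v)).card

/-- The valency of `v` (loops count twice). -/
def valency (v : G.V) : ℕ :=
  ∑ e : G.E, ((if (G.ends e).1 = v then 1 else 0) + (if (G.ends e).2 = v then 1 else 0))

/-- The intersection product on vertices: `(v·w)` is the number of edges joining `v` and
`w` when `v ≠ w`, and `(v·v) = -val(v) + 2 loop(v)`. -/
def inter (v w : G.V) : ℤ :=
  if v = w then -(G.valency v : ℤ) + 2 * (G.numLoops v : ℤ) else (G.numEdges v w : ℤ)

/-- The principal divisor `T_v = Σ_w (v·w) w`. -/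
def T (v : G.V) : G.V → ℤ := fun w => G.inter v w

/-- The group of principal divisors, generated by the `T_v`. -/
def Prin : AddSubgroup (G.V → ℤ) := AddSubgroup.closure (Set.range G.T)

/-- The Jacobian group `Div(G)/Prin(G)`. -/
abbrev Jac := (G.V → ℤ) ⧸ G.Prin

/-- A divisor is effective if all its coefficients are nonnegative. -/
def Effective {α : Type} (D : α → ℤ) : Prop := ∀ v, 0 ≤ D v

/-- The degree of a divisor. -/
def degree {α : Type} [Fintype α] (D : α → ℤ) : ℤ := ∑ v, D v

/-- The Baker–Norine rank of a divisor: `-1` if no effective divisor is linearly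
equivalent to `D`, and otherwise the largest `k ≥ 0` such that for every effective
divisor `E` of degree `k` some effective divisor is linearly equivalent to `D - E`. -/
noncomputable def rank (D : G.V → ℤ) : ℤ :=
  sSup {r : ℤ | r = -1 ∨ (0 ≤ r ∧ ∀ E : G.V → ℤ, Effective E → degree E = r →
      ∃ F : G.V → ℤ, Effective F ∧ D - E - F ∈ G.Prin)}

/-- An edge is a loop if its two endpoints coincide. -/
def IsLoop (e : G.E) : Prop := (G.ends e).1 = (G.ends e).2

/-- The refinement of `G` obtained by inserting `n e` new vertices in the interior of
each edge `e` (subdividing `e` into `n e + 1` edges). -/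
def subdivide (n : G.E → ℕ) : Multigraph where
  V := G.V ⊕ (Σ e : G.E, Fin (n e))
  E := Σ e : G.E, Fin (n e + 1)
  ends := fun x =>
    (if h : (x.2 : ℕ) = 0 then Sum.inl (G.ends x.1).1
        else Sum.inr ⟨x.1, ⟨(x.2 : ℕ) - 1, by have := x.2.isLt; omega⟩⟩,
     if h : (x.2 : ℕ) = n x.1 then Sum.inl (G.ends x.1).2
        else Sum.inr ⟨x.1, ⟨(x.2 : ℕ), by have := x.2.isLt; omega⟩⟩)

/-- The natural map `σ* : Div(G) → Div(G̃)` to a refinement, extending a divisor by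
zero on the new vertices. -/
def subdivMap (n : G.E → ℕ) (D : G.V → ℤ) : (G.subdivide n).V → ℤ := Sum.elim D 0

/-- `Ĝ`: the loopless refinement obtained by inserting one new vertex in the interior of
every loop-edge. -/
def hat : Multigraph := G.subdivide fun e => if (G.ends e).1 = (G.ends e).2 then 1 else 0

/-- The rank `r#_G(D) := r_{Ĝ}(σ* D)`. -/
noncomputable def rankSharp (D : G.V → ℤ) : ℤ :=
  G.hat.rank (G.subdivMap (fun e => if (G.ends e).1 = (G.ends e).2 then 1 else 0) D)

/-- A multigraph is loopless if no edge is a loop. -/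
def Loopless : Prop := ∀ e : G.E, (G.ends e).1 ≠ (G.ends e).2

/-- The genus (first Betti number) `g = |E| - |V| + 1` of a connected graph. -/
def genus : ℤ := (Fintype.card G.E : ℤ) - (Fintype.card G.V : ℤ) + 1

/-- The canonical divisor `K#_G = Σ_v (val(v) - 2) v`. -/
def canonical : G.V → ℤ := fun v => (G.valency v : ℤ) - 2

/-- The loopless graph obtained from `G` by removing all loop-edges. -/
def removeLoops : Multigraph where
  V := G.V
  E := {e : G.E // (G.ends e).1 ≠ (G.ends e).2}
  ends := fun e => G.ends e.1

/-- The virtual graph `G^ω` of a weighted graph `(G, ω)`: attach `ω v` loops at each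
vertex `v`. -/
def virt (w : G.V → ℕ) : Multigraph where
  V := G.V
  E := G.E ⊕ (Σ v : G.V, Fin (w v))
  ends := Sum.elim G.ends fun p => (p.1, p.1)

/-- The rank of a divisor on the weighted graph `(G, ω)`: `r_{(G,ω)}(D) := r#_{G^ω}(D)`. -/
noncomputable def rankW (w : G.V → ℕ) (D : G.V → ℤ) : ℤ := (G.virt w).rankSharp D

/-- The canonical divisor of the weighted graph `(G, ω)`. -/
def canonicalW (w : G.V → ℕ) : G.V → ℤ := fun v => (G.valency v : ℤ) + 2 * (w v : ℤ) - 2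

/-- The genus of the weighted graph `(G, ω)`: `b₁(G) + Σ_v ω(v)`. -/
def genusW (w : G.V → ℕ) : ℤ := G.genus + ∑ v, (w v : ℤ)

/-- The rose `R_g`: one vertex and `g` loop-edges. -/
def rose (g : ℕ) : Multigraph where
  V := Unit
  E := Fin g
  ends := fun _ => ((), ())

/-- The subgraph of `G` determined by a set of vertices and a set of edges with
endpoints among them. -/
def subgraph (Vs : Finset G.V) (Es : Finset G.E)
    (h : ∀ e ∈ Es, (G.ends e).1 ∈ Vs ∧ (G.ends e).2 ∈ Vs) : Multigraph where
  V := {x : G.V // x ∈ Vs}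
  E := {e : G.E // e ∈ Es}
  ends := fun e => (⟨(G.ends e.1).1, (h e.1 e.2).1⟩, ⟨(G.ends e.1).2, (h e.1 e.2).2⟩)

/-- Extension of a divisor on a subgraph by zero: `ι_* : Div(H) → Div(G)`. -/
def iota (Vs : Finset G.V) (D : {x : G.V // x ∈ Vs} → ℤ) : G.V → ℤ :=
  fun x => if h : x ∈ Vs then D ⟨x, h⟩ else 0

end Multigraph

namespace Multigraph

/-- A decomposition `G = H₁ ∨ H₂` of `G` associated to a cut vertex `v`:  `H₁`, `H₂` are
connected subgraphs with `V(H₁) ∩ V(H₂) = {v}`, `E(H₁) ∩ E(H₂) = ∅`, covering `G`. -/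
structure Wedge (G : Multigraph) where
  v : G.V
  V1 : Finset G.V
  V2 : Finset G.V
  hv1 : v ∈ V1
  hv2 : v ∈ V2
  E1 : Finset G.E
  E2 : Finset G.E
  cover_V : V1 ∪ V2 = Finset.univ
  inter_V : V1 ∩ V2 = {v}
  cover_E : E1 ∪ E2 = Finset.univ
  disj_E : E1 ∩ E2 = ∅
  ends1 : ∀ e ∈ E1, (G.ends e).1 ∈ V1 ∧ (G.ends e).2 ∈ V1
  ends2 : ∀ e ∈ E2, (G.ends e).1 ∈ V2 ∧ (G.ends e).2 ∈ V2
  conn1 : (G.subgraph V1 E1 ends1).Connected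
  conn2 : (G.subgraph V2 E2 ends2).Connected

/-- The first subgraph `H₁` of a wedge decomposition. -/
def Wedge.H1 {G : Multigraph} (W : G.Wedge) : Multigraph := G.subgraph W.V1 W.E1 W.ends1

/-- The second subgraph `H₂` of a wedge decomposition. -/
def Wedge.H2 {G : Multigraph} (W : G.Wedge) : Multigraph := G.subgraph W.V2 W.E2 W.ends2

variable (G : Multigraph)

/-- The divisor `div(f)` of an integer-valued function `f` on the vertices
(loops contribute zero). -/
def divOf (f : G.V → ℤ) : G.V → ℤ := fun v =>
  ∑ e : G.E, ((if (G.ends e).1 = v then f v - f (G.ends e).2 else 0)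
            + (if (G.ends e).2 = v then f v - f (G.ends e).1 else 0))

/-- An isomorphism of multigraphs (edges may be matched with either orientation). -/
structure Iso (G H : Multigraph) where
  vEquiv : G.V ≃ H.V
  eEquiv : G.E ≃ H.E
  compat : ∀ e : G.E,
    H.ends (eEquiv e) = (vEquiv (G.ends e).1, vEquiv (G.ends e).2) ∨
    H.ends (eEquiv e) = (vEquiv (G.ends e).2, vEquiv (G.ends e).1)

end Multigraph

/-!
Bisecting the `g` loops of the rose turns it into a star whose centre `c` is joined to each
midpoint `u` by two edges, so the principal divisors are generated by the `2c - 2u`. A divisor is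
therefore equivalent to an effective one precisely when its degree is at least the number of
midpoints with odd coefficient. Subtracting an effective divisor of degree `k` from `d • c` makes at
most `min k g` of these coefficients odd, with equality attained, so the rank is the largest `k`
with `k + min k g ≤ d`.
-/

namespace Multigraph

section Divisor

variable {α : Type}

lemma degree_add [Fintype α] (D D' : α → ℤ) : degree (D + D') = degree D + degree D' :=
  Finset.sum_add_distrib

lemma degree_sub [Fintype α] (D D' : α → ℤ) : degree (D - D') = degree D - degree D' :=
  Finset.sum_sub_distrib D D'

lemma degree_single [Fintype α] [DecidableEq α] (v : α) (a : ℤ) : degree (Pi.single v a) = a :=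
  Fintype.sum_pi_single' v a

lemma degree_const [Unique α] [Fintype α] (a : ℤ) : degree (fun _ : α => a) = a :=
  Fintype.sum_unique _

lemma Effective.add {D D' : α → ℤ} (hD : Effective D) (hD' : Effective D') :
    Effective (D + D') :=
  fun v => add_nonneg (hD v) (hD' v)

lemma effective_single [DecidableEq α] (v : α) {a : ℤ} (ha : 0 ≤ a) :
    Effective (Pi.single v a : α → ℤ) :=
  fun w => (Pi.single_nonneg (α := fun _ => ℤ)).2 ha w

end Divisor

section LinearSystem

variable (G : Multigraph)

/-- The linear system `|D|` of effective divisors linearly equivalent to `D`. -/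
def linearSystem (D : G.V → ℤ) : Set (G.V → ℤ) := {F | Effective F ∧ D - F ∈ G.Prin}

variable {G}

lemma linearSystem_add_nonempty {D E : G.V → ℤ} (hD : (G.linearSystem D).Nonempty)
    (hE : Effective E) : (G.linearSystem (D + E)).Nonempty := by
  obtain ⟨F, hF, hDF⟩ := hD
  exact ⟨F + E, hF.add hE, by rwa [add_sub_add_right_eq_sub]⟩

/-- An obstruction in degree `k + 1` rules out all larger degrees: pad it with extra points. -/
lemma rank_eq_of_forall_of_exists {D : G.V → ℤ} {k : ℤ} (hk : 0 ≤ k)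
    (hall : ∀ E : G.V → ℤ, Effective E → degree E = k → (G.linearSystem (D - E)).Nonempty)
    (hex : ∃ E : G.V → ℤ, Effective E ∧ degree E = k + 1 ∧
      ¬ (G.linearSystem (D - E)).Nonempty) :
    G.rank D = k := by
  obtain ⟨E, hE, hdeg, hempty⟩ := hex
  obtain ⟨v⟩ : Nonempty G.V := by
    by_contra hV
    have : degree E = 0 := by simp [degree, Finset.univ_eq_empty_iff.2 (not_nonempty_iff.1 hV)]
    omega
  refine IsGreatest.csSup_eq ⟨Or.inr ⟨hk, hall⟩, ?_⟩
  rintro r (rfl | ⟨-, hr⟩)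
  · omega
  by_contra! hkr
  have hpad : Effective (Pi.single v (r - (k + 1)) : G.V → ℤ) := effective_single v (by omega)
  have hsys := hr _ (hE.add hpad) (by rw [degree_add, degree_single, hdeg]; ring)
  have hsum := linearSystem_add_nonempty hsys hpad
  rw [sub_add_eq_sub_sub, sub_add_cancel] at hsum
  exact hempty hsum

end LinearSystem

section Boundary

variable (G : Multigraph)

/-- The boundary `∂e = w - v` of an edge `e` oriented from `v` to `w`, as a divisor. It gives the
factorization `-∂ ∂ᵀ` of the intersection form. -/
def boundary (e : G.E) : G.V → ℤ := Pi.single (G.ends e).2 1 - Pi.single (G.ends e).1 1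

lemma degree_boundary (e : G.E) : degree (G.boundary e) = 0 := by
  rw [boundary, degree_sub, degree_single, degree_single, sub_self]

lemma inter_eq_neg_sum_boundary (v w : G.V) :
    G.inter v w = -∑ e, G.boundary e v * G.boundary e w := by
  by_cases hvw : v = w
  · subst hvw
    simp only [inter, if_true, valency, numLoops, Finset.card_filter, Nat.cast_sum,
      Finset.mul_sum, ← Finset.sum_neg_distrib, ← Finset.sum_add_distrib, boundary]
    refine Finset.sum_congr rfl fun e _ => ?_
    simp only [Pi.sub_apply, Pi.single_apply, Prod.ext_iff]
    grind
  · simp only [inter, if_neg hvw, numEdges, Finset.card_filter, Nat.cast_sum,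
      ← Finset.sum_neg_distrib, boundary]
    refine Finset.sum_congr rfl fun e _ => ?_
    simp only [Pi.sub_apply, Pi.single_apply, Prod.ext_iff]
    grind

lemma T_eq_neg_sum_boundary (v : G.V) : G.T v = -∑ e, G.boundary e v • G.boundary e := by
  ext w
  simp [T, inter_eq_neg_sum_boundary]

variable {G}

lemma degree_eq_zero_of_mem_prin {D : G.V → ℤ} (hD : D ∈ G.Prin) : degree D = 0 := by
  induction hD using AddSubgroup.closure_induction with
  | mem D hD =>
    obtain ⟨v, rfl⟩ := hD
    have hcomm : degree (G.T v) = -∑ e, G.boundary e v * degree (G.boundary e) := by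
      simp only [degree, T, inter_eq_neg_sum_boundary, Finset.sum_neg_distrib, Finset.mul_sum]
      rw [Finset.sum_comm]
    simp [hcomm, degree_boundary]
  | zero => simp [degree]
  | add D D' _ _ hD hD' => rw [degree_add, hD, hD', add_zero]
  | neg D _ hD => simpa [degree] using hD

end Boundary

section Bisect

variable (G : Multigraph)

/-- The refinement of `G` with one new vertex in the interior of every edge. It is `Ĝ` when all
edges of `G` are loops. -/
abbrev bisect : Multigraph := G.subdivide fun _ => 1

variable {G}

/-- A vertex of `G`, seen as a vertex of `G.bisect`. -/
def oldVertex (v : G.V) : G.bisect.V := Sum.inl v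

/-- The new vertex of `G.bisect` in the interior of the edge `e`. -/
def midpoint (e : G.E) : G.bisect.V := Sum.inr ⟨e, (0 : Fin 1)⟩

/-- The edge of `G.bisect` that runs from the first endpoint of `e` to its midpoint. -/
def firstHalf (e : G.E) : G.bisect.E := ⟨e, (0 : Fin 2)⟩

/-- The edge of `G.bisect` that runs from the midpoint of `e` to its second endpoint. -/
def secondHalf (e : G.E) : G.bisect.E := ⟨e, (1 : Fin 2)⟩

lemma rankSharp_eq_rank_bisect (hG : ∀ e, G.IsLoop e) (D : G.V → ℤ) :
    G.rankSharp D = G.bisect.rank (G.subdivMap (fun _ => 1) D) :=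
  congrArg (fun n => (G.subdivide n).rank (G.subdivMap n D)) (funext fun e => if_pos (hG e))

lemma oldVertex_ne_midpoint (v : G.V) (e : G.E) : oldVertex v ≠ midpoint e :=
  Sum.inl_ne_inr

lemma oldVertex_injective : Function.Injective (oldVertex (G := G)) :=
  Sum.inl_injective

lemma midpoint_injective : Function.Injective (midpoint (G := G)) :=
  fun _ _ h => (Sigma.mk.inj (Sum.inr.inj h)).1

lemma forall_bisect {p : G.bisect.V → Prop} :
    (∀ w, p w) ↔ (∀ v : G.V, p (oldVertex v)) ∧ ∀ e : G.E, p (midpoint e) := by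
  refine ⟨fun h => ⟨fun _ => h _, fun _ => h _⟩, fun ⟨hold, hmid⟩ => ?_⟩
  rintro (v | ⟨e, i⟩)
  · exact hold v
  · rw [show i = 0 from Subsingleton.elim (α := Fin 1) i 0]
    exact hmid e

lemma degree_bisect (D : G.bisect.V → ℤ) :
    degree D = ∑ v : G.V, D (oldVertex v) + ∑ e : G.E, D (midpoint e) := by
  have hsplit : degree D = ∑ v : G.V, D (Sum.inl v) + ∑ p : (Σ _ : G.E, Fin 1), D (Sum.inr p) :=
    Fintype.sum_sum_type _
  rw [hsplit, Fintype.sum_sigma]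
  exact congrArg _ (Finset.sum_congr rfl fun e _ => Fin.sum_univ_one _)

lemma sum_edges_bisect {M : Type*} [AddCommMonoid M] (f : G.bisect.E → M) :
    ∑ x, f x = ∑ e : G.E, (f (firstHalf e) + f (secondHalf e)) :=
  (Fintype.sum_sigma _).trans (Finset.sum_congr rfl fun _ _ => Fin.sum_univ_two _)

lemma boundary_firstHalf (e : G.E) : G.bisect.boundary (firstHalf e) =
    Pi.single (midpoint e) 1 - Pi.single (oldVertex (G.ends e).1) 1 :=
  rfl

lemma boundary_firstHalf_midpoint (e e' : G.E) :
    G.bisect.boundary (firstHalf e) (midpoint e') = if e = e' then 1 else 0 := by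
  simp [boundary_firstHalf, Pi.single_apply, midpoint_injective.eq_iff,
    (oldVertex_ne_midpoint _ _).symm, eq_comm]

lemma boundary_firstHalf_oldVertex (e : G.E) (v : G.V) :
    G.bisect.boundary (firstHalf e) (oldVertex v) = if (G.ends e).1 = v then -1 else 0 := by
  simp [boundary_firstHalf, Pi.single_apply, (oldVertex_ne_midpoint _ _).symm,
    oldVertex_injective.eq_iff, neg_ite, eq_comm (a := v)]

lemma boundary_secondHalf (e : G.E) : G.bisect.boundary (secondHalf e) =
    Pi.single (oldVertex (G.ends e).2) 1 - Pi.single (midpoint e) 1 :=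
  rfl

lemma IsLoop.boundary_secondHalf {e : G.E} (he : G.IsLoop e) :
    G.bisect.boundary (secondHalf e) = -G.bisect.boundary (firstHalf e) := by
  rw [Multigraph.boundary_secondHalf, boundary_firstHalf, he, neg_sub]

lemma T_bisect (hG : ∀ e, G.IsLoop e) (v : G.bisect.V) :
    G.bisect.T v = (-2 : ℤ) • ∑ e : G.E,
      G.bisect.boundary (firstHalf e) v • G.bisect.boundary (firstHalf e) := by
  rw [T_eq_neg_sum_boundary, sum_edges_bisect, neg_smul, Finset.smul_sum]
  simp only [(hG _).boundary_secondHalf, Pi.neg_apply, smul_neg, neg_smul, neg_neg, two_smul]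

lemma T_midpoint (hG : ∀ e, G.IsLoop e) (e : G.E) :
    G.bisect.T (midpoint e) = (-2 : ℤ) • G.bisect.boundary (firstHalf e) := by
  simp only [T_bisect hG, boundary_firstHalf_midpoint, ite_smul, one_smul, zero_smul,
    Finset.sum_ite_eq', Finset.mem_univ, if_true]

lemma even_of_mem_prin_bisect (hG : ∀ e, G.IsLoop e) {D : G.bisect.V → ℤ}
    (hD : D ∈ G.bisect.Prin) (v : G.bisect.V) : Even (D v) := by
  induction hD using AddSubgroup.closure_induction with
  | mem D hD =>
    obtain ⟨w, rfl⟩ := hD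
    rw [T_bisect hG, Pi.smul_apply, smul_eq_mul]
    exact even_two.neg.mul_right _
  | zero => exact Even.zero
  | add D D' _ _ hD hD' => exact hD.add hD'
  | neg D _ hD => exact hD.neg

/-- The divisor on `G.bisect` with coefficients `D` at the vertices of `G` and `f` at the
midpoints of its edges. -/
def bisectDivisor (D : G.V → ℤ) (f : G.E → ℤ) : G.bisect.V → ℤ := Sum.elim D fun p => f p.1

lemma bisectDivisor_midpoint (D : G.V → ℤ) (f : G.E → ℤ) (e : G.E) :
    bisectDivisor D f (midpoint e) = f e :=
  rfl

lemma subdivMap_eq_bisectDivisor (D : G.V → ℤ) :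
    G.subdivMap (fun _ => 1) D = bisectDivisor D 0 :=
  rfl

lemma degree_bisectDivisor (D : G.V → ℤ) (f : G.E → ℤ) :
    degree (bisectDivisor D f) = degree D + ∑ e, f e :=
  degree_bisect _

lemma effective_bisectDivisor {D : G.V → ℤ} {f : G.E → ℤ} (hD : Effective D)
    (hf : ∀ e, 0 ≤ f e) : Effective (bisectDivisor D f) :=
  forall_bisect.2 ⟨hD, hf⟩

lemma sum_midpoint_le_degree {E : G.bisect.V → ℤ} (hE : Effective E) :
    ∑ e, E (midpoint e) ≤ degree E := by
  rw [degree_bisect]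
  exact le_add_of_nonneg_left (Finset.sum_nonneg fun _ _ => hE _)

lemma sum_midpoint_emod_two_le {E : G.bisect.V → ℤ} (hE : Effective E) :
    ∑ e, E (midpoint e) % 2 ≤ min (degree E) (Fintype.card G.E) := by
  refine le_min ?_ ?_
  · refine le_trans (Finset.sum_le_sum fun e _ => ?_) (sum_midpoint_le_degree hE)
    have hEe := hE (midpoint e)
    omega
  · calc ∑ e, E (midpoint e) % 2 ≤ ∑ _e : G.E, 1 := Finset.sum_le_sum fun e _ => by omega
      _ = Fintype.card G.E := by simp

lemma exists_sum_midpoint_emod_two_eq (G : Multigraph) [Nonempty G.V] {k : ℤ} (hk : 0 ≤ k) :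
    ∃ E : G.bisect.V → ℤ, Effective E ∧ degree E = k ∧
      ∑ e, E (midpoint e) % 2 = min k (Fintype.card G.E) := by
  obtain ⟨v⟩ := ‹Nonempty G.V›
  lift k to ℕ using hk
  obtain ⟨S, -, hS⟩ : ∃ S ⊆ (Finset.univ : Finset G.E), S.card = min k (Fintype.card G.E) :=
    Finset.exists_subset_card_eq (by simp)
  have hcount : ∑ e, (if e ∈ S then (1 : ℤ) else 0) = min (k : ℤ) (Fintype.card G.E) := by
    simp [hS]
  refine ⟨bisectDivisor (Pi.single v (k - min (k : ℤ) (Fintype.card G.E)))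
      fun e => if e ∈ S then 1 else 0,
    effective_bisectDivisor (effective_single _ (by omega)) fun e => by split_ifs <;> simp, ?_, ?_⟩
  · rw [degree_bisectDivisor, degree_single, hcount, sub_add_cancel]
  · rw [← hcount]
    refine Finset.sum_congr rfl fun e _ => ?_
    rw [bisectDivisor_midpoint]
    split_ifs <;> rfl

end Bisect

section OneVertex

variable {G : Multigraph}

lemma isLoop_of_subsingleton [Subsingleton G.V] (e : G.E) : G.IsLoop e := Subsingleton.elim _ _

variable [Unique G.V]

lemma degree_bisect_of_unique (D : G.bisect.V → ℤ) :
    degree D = D (oldVertex default) + ∑ e : G.E, D (midpoint e) := by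
  rw [degree_bisect, Fintype.sum_unique]

lemma eq_sum_boundary_of_degree_eq_zero {D : G.bisect.V → ℤ} (hD : degree D = 0) :
    D = ∑ e : G.E, D (midpoint e) • G.bisect.boundary (firstHalf e) := by
  refine funext (forall_bisect.2 ⟨fun v => ?_, fun e => ?_⟩)
  · obtain rfl : v = default := Subsingleton.elim _ _
    rw [degree_bisect_of_unique] at hD
    simp [boundary_firstHalf_oldVertex, Unique.eq_default, eq_neg_of_add_eq_zero_left hD]
  · simp [boundary_firstHalf_midpoint]

lemma mem_prin_bisect {D : G.bisect.V → ℤ} :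
    D ∈ G.bisect.Prin ↔ degree D = 0 ∧ ∀ e, Even (D (midpoint e)) := by
  refine ⟨fun hD => ⟨degree_eq_zero_of_mem_prin hD,
    fun e => even_of_mem_prin_bisect isLoop_of_subsingleton hD _⟩, fun ⟨hdeg, heven⟩ => ?_⟩
  choose k hk using heven
  have hterm (e : G.E) : D (midpoint e) • G.bisect.boundary (firstHalf e) =
      (-k e) • G.bisect.T (midpoint e) := by
    rw [T_midpoint isLoop_of_subsingleton, smul_smul, hk]
    ring_nf
  rw [eq_sum_boundary_of_degree_eq_zero hdeg]
  refine sum_mem fun e _ => ?_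
  rw [hterm]
  exact zsmul_mem (AddSubgroup.subset_closure (Set.mem_range_self _)) _

lemma linearSystem_bisect_nonempty_iff {D : G.bisect.V → ℤ} :
    (G.bisect.linearSystem D).Nonempty ↔ ∑ e, D (midpoint e) % 2 ≤ degree D := by
  constructor
  · rintro ⟨F, hF, hDF⟩
    obtain ⟨hdeg, heven⟩ := mem_prin_bisect.1 hDF
    have hle (e : G.E) : D (midpoint e) % 2 ≤ F (midpoint e) := by
      have hFe := hF (midpoint e)
      obtain ⟨k, hk⟩ := heven e
      rw [Pi.sub_apply] at hk
      omega
    calc ∑ e, D (midpoint e) % 2 ≤ ∑ e, F (midpoint e) := Finset.sum_le_sum fun e _ => hle e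
      _ ≤ degree F := sum_midpoint_le_degree hF
      _ = degree D := (sub_eq_zero.1 ((degree_sub D F).symm.trans hdeg)).symm
  · intro hD
    refine ⟨bisectDivisor (Pi.single default (degree D - ∑ e, D (midpoint e) % 2))
        fun e => D (midpoint e) % 2,
      effective_bisectDivisor (effective_single _ (sub_nonneg.2 hD))
        fun e => Int.emod_nonneg _ two_ne_zero,
      mem_prin_bisect.2 ⟨?_, fun e => ?_⟩⟩
    · rw [degree_sub, degree_bisectDivisor, degree_single, sub_add_cancel, sub_self]
    · rw [Pi.sub_apply, bisectDivisor_midpoint, Int.even_iff]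
      omega

lemma linearSystem_bisectDivisor_sub_nonempty_iff {D : G.V → ℤ} {E : G.bisect.V → ℤ} :
    (G.bisect.linearSystem (bisectDivisor D 0 - E)).Nonempty ↔
      degree E + ∑ e, E (midpoint e) % 2 ≤ degree D := by
  have hparity (e : G.E) : -E (midpoint e) % 2 = E (midpoint e) % 2 := by omega
  rw [linearSystem_bisect_nonempty_iff, degree_sub, degree_bisectDivisor]
  simp only [Pi.sub_apply, bisectDivisor_midpoint, Pi.zero_apply, zero_sub, hparity,
    Finset.sum_const_zero, add_zero, le_sub_iff_add_le']

end OneVertex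

instance (g : ℕ) : Unique (rose g).V := inferInstanceAs (Unique Unit)

lemma card_edges_rose (g : ℕ) : Fintype.card (rose g).E = g := Fintype.card_fin g

end Multigraph

open Multigraph in
theorem rank_rose_general (G : Multigraph) [Unique G.V] {D : G.V → ℤ} (hD : 0 ≤ degree D) :
    G.rankSharp D = max (degree D / 2) (degree D - Fintype.card G.E) := by
  rw [rankSharp_eq_rank_bisect isLoop_of_subsingleton, subdivMap_eq_bisectDivisor]
  refine rank_eq_of_forall_of_exists (by omega) (fun E hE hdeg => ?_) ?_
  · rw [linearSystem_bisectDivisor_sub_nonempty_iff]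
    have hodd := sum_midpoint_emod_two_le hE
    omega
  · obtain ⟨E, hE, hdeg, hodd⟩ := exists_sum_midpoint_emod_two_eq G
      (k := max (degree D / 2) (degree D - Fintype.card G.E) + 1) (by omega)
    refine ⟨E, hE, hdeg, ?_⟩
    rw [linearSystem_bisectDivisor_sub_nonempty_iff]
    omega

open Multigraph in
/-- For `g ≥ 1` and `0 ≤ d ≤ 2g`, the divisor `d·v` on the rose
`R_g` with one vertex `v` and `g` loops has `r#_{R_g}(d·v) = ⌊d/2⌋`. -/
theorem rank_rose (g d : ℕ) (hg : 1 ≤ g) (hd : d ≤ 2 * g) :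
    (Multigraph.rose g).rankSharp (fun _ => (d : ℤ)) = ((d / 2 : ℕ) : ℤ) := by
  rw [rank_rose_general _ (by rw [degree_const]; omega), degree_const, card_edges_rose]
  omega
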